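/- Let p be an at most isolated singular point of D (as in the context). Then rk M'_f(p) = 0 if and only if p is a singular point of D (i.e. (∂g/∂y_i)(q) = 0 for all i) and D is not strongly Euler homogeneous at p. -/

import Mathlib

open MvPolynomial

noncomputable section

/-- The Jacobian syzygy module `K` of `f`, as a set:
tuples `a = (a_0, …, a_n)` of polynomials with `∑ a_i ∂f/∂x_i = 0`. -/
def syzSet (n : ℕ) (f : MvPolynomial (Fin (n + 1)) ℂ) :
    Set (Fin (n + 1) → MvPolynomial (Fin (n + 1)) ℂ) :=
  {a | ∑ i, a i * pderiv i f = 0}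

/-- The image of the syzygy module under coordinatewise evaluation at `p`. -/
def evSyz (n : ℕ) (f : MvPolynomial (Fin (n + 1)) ℂ) (p : Fin (n + 1) → ℂ) :
    Set (Fin (n + 1) → ℂ) :=
  (fun a => fun i => eval p (a i)) '' syzSet n f

/-- The syzygy rank `rk M'_f(p)`. -/
def syzRank (n : ℕ) (f : MvPolynomial (Fin (n + 1)) ℂ) (p : Fin (n + 1) → ℂ) : ℕ :=
  Module.finrank ℂ (Submodule.span ℂ (evSyz n f p))

/-- The augmented syzygy rank `rk M_f(p)`. -/
def augSyzRank (n : ℕ) (f : MvPolynomial (Fin (n + 1)) ℂ) (p : Fin (n + 1) → ℂ) : ℕ :=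
  Module.finrank ℂ (Submodule.span ℂ (evSyz n f p ∪ {p}))

/-- The dehomogenization `g(y_1,…,y_n) = f(1,y_1,…,y_n)`. -/
def dehom (n : ℕ) (f : MvPolynomial (Fin (n + 1)) ℂ) : MvPolynomial (Fin n) ℂ :=
  aeval (Fin.cons (1 : MvPolynomial (Fin n) ℂ) fun i => X i) f

/-- `D = V(f)` is strongly Euler homogeneous at `p` (with `p_0 = 1`): there exist an open
neighborhood `U` of `q = (p_1,…,p_n)` and analytic functions `a_i` on `U` vanishing at `q`
with `g = ∑ a_i ∂g/∂y_i` on `U`, where `g` is the dehomogenization of `f`. -/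
def StronglyEulerHomogeneousAt (n : ℕ) (f : MvPolynomial (Fin (n + 1)) ℂ)
    (p : Fin (n + 1) → ℂ) : Prop :=
  ∃ (U : Set (Fin n → ℂ)) (a : Fin n → (Fin n → ℂ) → ℂ),
    IsOpen U ∧ (fun i => p i.succ) ∈ U ∧
    (∀ i, ∀ y ∈ U, AnalyticAt ℂ (a i) y) ∧
    (∀ i, a i (fun j => p j.succ) = 0) ∧
    ∀ y ∈ U,
      eval y (dehom n f) = ∑ i, a i y * eval y (pderiv i (dehom n f))

/-- `p` is an at most isolated singular point of `D`: on some neighborhood of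
`q = (p_1,…,p_n)`, the only point where `g` and all its partial derivatives vanish is `q`. -/
def AtMostIsolatedSingAt (n : ℕ) (f : MvPolynomial (Fin (n + 1)) ℂ)
    (p : Fin (n + 1) → ℂ) : Prop :=
  ∃ U₀ : Set (Fin n → ℂ), IsOpen U₀ ∧ (fun i => p i.succ) ∈ U₀ ∧
    ∀ y ∈ U₀, (eval y (dehom n f) = 0 ∧ ∀ i, eval y (pderiv i (dehom n f)) = 0) →
      y = (fun i => p i.succ)

section Helpers

open Filter Topology Asymptotics

lemma uni_coeff_zero (k : ℕ) : ∀ (P : Polynomial ℂ),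
    (fun t : ℂ => P.eval t) =O[𝓝[≠] 0] (fun t : ℂ => ‖t‖ ^ k) → ∀ j < k, P.coeff j = 0 := by
  induction k with
  | zero => intro P _ j hj; omega
  | succ k ih =>
    intro P hP
    have hlim : Tendsto (fun t : ℂ => ‖t‖ ^ (k + 1)) (𝓝[≠] 0) (𝓝 0) := by
      have : Continuous (fun t : ℂ => ‖t‖ ^ (k + 1)) := by fun_prop
      have h := this.tendsto 0
      simp only [norm_zero, ne_eq, Nat.add_eq_zero_iff, one_ne_zero, and_false, not_false_eq_true,
        zero_pow] at h
      exact h.mono_left nhdsWithin_le_nhds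
    have h0 : P.eval 0 = 0 := by
      have h1 := hP.trans_tendsto hlim
      have h2 : Tendsto (fun t : ℂ => P.eval t) (𝓝[≠] 0) (𝓝 (P.eval 0)) :=
        (P.continuous.tendsto 0).mono_left nhdsWithin_le_nhds
      exact tendsto_nhds_unique h2 h1
    have hc0 : P.coeff 0 = 0 := by rw [Polynomial.coeff_zero_eq_eval_zero, h0]
    have hdec : ∀ t, P.eval t = t * P.divX.eval t := by
      intro t
      conv_lhs => rw [← Polynomial.X_mul_divX_add P, hc0]
      simp
    have hd : (fun t : ℂ => P.divX.eval t) =O[𝓝[≠] 0] (fun t : ℂ => ‖t‖ ^ k) := by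
      obtain ⟨c, hc⟩ := hP.bound
      refine IsBigO.of_bound c ?_
      filter_upwards [hc, self_mem_nhdsWithin] with t ht ht0
      have ht0 : 0 < ‖t‖ := norm_pos_iff.mpr ht0
      rw [hdec, norm_mul] at ht
      simp only [norm_pow, norm_norm] at ht ⊢
      rw [pow_succ] at ht
      have : ‖t‖ * ‖P.divX.eval t‖ ≤ ‖t‖ * (c * ‖t‖ ^ k) := by linarith
      exact le_of_mul_le_mul_left this ht0
    intro j hj
    cases j with
    | zero => exact hc0
    | succ j =>
      have := ih _ hd j (by omega)
      rwa [Polynomial.coeff_divX] at this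

lemma eval_smul_homog {σ : Type*} {m : ℕ} {H : MvPolynomial σ ℂ} (hH : H.IsHomogeneous m)
    (t : ℂ) (z : σ → ℂ) : eval (fun i => t * z i) H = t ^ m * eval z H := by
  rw [eval_eq, eval_eq, Finset.mul_sum]
  refine Finset.sum_congr rfl fun s hs => ?_
  have := hH.degree_eq_sum_deg_support hs
  simp_rw [mul_pow, Finset.prod_mul_distrib, Finset.prod_pow_eq_pow_sum]
  rw [← this]
  ring

lemma mem_pow_of_isBigO {N : ℕ} (k : ℕ) (H : MvPolynomial (Fin N) ℂ)
    (hH : (fun y : Fin N → ℂ => eval y H) =O[𝓝 0] (fun y => ‖y‖ ^ k)) :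
    H ∈ idealOfVars (Fin N) ℂ ^ k := by
  have hz : ∀ j < k, homogeneousComponent j H = 0 := by
    intro j hj
    apply MvPolynomial.funext
    intro z
    rw [map_zero]
    let P : Polynomial ℂ := ∑ i ∈ Finset.range (H.totalDegree + 1),
      Polynomial.monomial i (eval z (homogeneousComponent i H))
    have hPe : ∀ t : ℂ, P.eval t = eval (fun i => t * z i) H := by
      intro t
      conv_rhs => rw [← sum_homogeneousComponent H]
      simp only [P, Polynomial.eval_finsetSum, map_sum, Polynomial.eval_monomial]
      refine Finset.sum_congr rfl fun i _ => ?_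
      rw [eval_smul_homog (homogeneousComponent_isHomogeneous i H)]
      ring
    have hPO : (fun t : ℂ => P.eval t) =O[𝓝[≠] 0] (fun t : ℂ => ‖t‖ ^ k) := by
      have hcont : Tendsto (fun t : ℂ => (fun i => t * z i : Fin N → ℂ)) (𝓝[≠] 0) (𝓝 0) := by
        have : Continuous (fun t : ℂ => (fun i => t * z i : Fin N → ℂ)) := by fun_prop
        have h := this.tendsto 0
        simp only [zero_mul] at h
        exact h.mono_left nhdsWithin_le_nhds
      have h1 := hH.comp_tendsto hcont
      simp only [Function.comp_def] at h1
      simp_rw [hPe]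
      refine h1.trans (IsBigO.of_bound (‖z‖ ^ k) (Eventually.of_forall fun t => ?_))
      have : ‖(fun i => t * z i : Fin N → ℂ)‖ = ‖t‖ * ‖z‖ := by
        rw [← norm_smul]; rfl
      rw [this]
      simp [mul_pow, mul_comm]
    have hc := uni_coeff_zero k P hPO j hj
    simp only [P, Polynomial.finsetSum_coeff, Polynomial.coeff_monomial] at hc
    rw [Finset.sum_ite_eq' ] at hc
    split_ifs at hc with h
    · exact hc
    · rw [homogeneousComponent_eq_zero]
      · simp
      · simpa using h
  rw [mem_pow_idealOfVars_iff']
  intro x hx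
  have := congrArg (coeff x) (hz _ hx)
  rw [coeff_homogeneousComponent] at this
  simpa using this

lemma exists_poly_approx {N : ℕ} (b : (Fin N → ℂ) → ℂ) (hb : AnalyticAt ℂ b 0) (k : ℕ) :
    ∃ T : MvPolynomial (Fin N) ℂ,
      (fun y => b y - eval y T) =O[𝓝 0] (fun y : Fin N → ℂ => ‖y‖ ^ k) := by
  obtain ⟨s, hs⟩ := hb
  refine ⟨∑ m ∈ Finset.range k, ∑ r : Fin m → Fin N,
    C (s m (fun j => Pi.single (r j) 1)) * ∏ j, X (r j), ?_⟩
  have h := hs.isBigO_sub_partialSum_pow k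
  simp only [zero_add] at h
  refine h.congr_left fun y => ?_
  congr 1
  simp only [FormalMultilinearSeries.partialSum, map_sum, map_mul, eval_C, map_prod, eval_X]
  refine Finset.sum_congr rfl fun m _ => ?_
  have hy : y = ∑ j, y j • (Pi.single j 1 : Fin N → ℂ) := by
    simpa using (pi_eq_sum_univ' y)
  conv_lhs => rw [hy]
  rw [ContinuousMultilinearMap.map_sum]
  refine Finset.sum_congr rfl fun r _ => ?_
  rw [ContinuousMultilinearMap.map_smul_univ, smul_eq_mul, mul_comm]

lemma krull_zero {N : ℕ} {ι : Type*} [Fintype ι] (G : MvPolynomial (Fin N) ℂ)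
    (F : ι → MvPolynomial (Fin N) ℂ) (b : ι → (Fin N → ℂ) → ℂ)
    (hb : ∀ i, AnalyticAt ℂ (b i) 0)
    (h : ∀ᶠ y in 𝓝 (0 : Fin N → ℂ), eval y G = ∑ i, b i y * eval y (F i)) :
    ∃ (u : MvPolynomial (Fin N) ℂ) (c : ι → MvPolynomial (Fin N) ℂ),
      eval 0 u ≠ 0 ∧ u * G = ∑ i, c i * F i := by
  let J : Ideal (MvPolynomial (Fin N) ℂ) := Ideal.span (Set.range F)
  have key : ∀ k, ∃ T : ι → MvPolynomial (Fin N) ℂ,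
      G - ∑ i, T i * F i ∈ idealOfVars (Fin N) ℂ ^ k := by
    intro k
    choose T hT using fun i => exists_poly_approx (b i) (hb i) k
    refine ⟨T, mem_pow_of_isBigO k _ ?_⟩
    have h2 : (fun y : Fin N → ℂ => ∑ i, (b i y - eval y (T i)) * eval y (F i)) =O[𝓝 0]
        (fun y => ‖y‖ ^ k) := by
      refine IsBigO.fun_sum fun i _ => ?_
      have h3 : (fun y : Fin N → ℂ => eval y (F i)) =O[𝓝 0] (fun _ => (1 : ℝ)) := by
        have hc : Continuous (fun y : Fin N → ℂ => eval y (F i)) := MvPolynomial.continuous_eval _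
        exact (hc.tendsto 0).isBigO_one ℝ
      simpa using (hT i).mul h3
    refine h2.congr' ?_ EventuallyEq.rfl
    filter_upwards [h] with y hy
    simp [hy, sub_mul]
  have hmem : (Ideal.Quotient.mk J G) ∈
      (⨅ k : ℕ, idealOfVars (Fin N) ℂ ^ k • ⊤ :
        Submodule (MvPolynomial (Fin N) ℂ) (MvPolynomial (Fin N) ℂ ⧸ J)) := by
    rw [Submodule.mem_iInf]
    intro k
    obtain ⟨T, hT⟩ := key k
    have hJ : ∑ i, T i * F i ∈ J :=
      Ideal.sum_mem _ fun i _ => Ideal.mul_mem_left _ _ (Ideal.subset_span ⟨i, rfl⟩)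
    have : Ideal.Quotient.mk J G = (G - ∑ i, T i * F i) • (1 : MvPolynomial (Fin N) ℂ ⧸ J) := by
      change _ = Ideal.Quotient.mk J (_ * 1)
      rw [mul_one]
      rw [map_sub, Ideal.Quotient.eq_zero_iff_mem.mpr hJ, sub_zero]
    rw [this]
    exact Submodule.smul_mem_smul hT trivial
  obtain ⟨r, hr⟩ := (Ideal.mem_iInf_smul_pow_eq_bot_iff _ _).mp hmem
  have hJ : (1 - (r : MvPolynomial (Fin N) ℂ)) * G ∈ J := by
    rw [← Ideal.Quotient.eq_zero_iff_mem, map_mul, map_sub, map_one, sub_mul, one_mul, sub_eq_zero]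
    exact hr.symm
  obtain ⟨c, hc⟩ := (Ideal.mem_span_range_iff_exists_fun).mp hJ
  refine ⟨_, c, ?_, hc.symm⟩
  have hr0 : eval 0 (r : MvPolynomial (Fin N) ℂ) = 0 := by
    have h1 : (r : MvPolynomial (Fin N) ℂ) ∈ idealOfVars (Fin N) ℂ ^ 1 := by
      rw [pow_one]; exact r.2
    rw [mem_pow_idealOfVars_iff'] at h1
    have := h1 0 (by simp)
    change constantCoeff _ = 0 at this
    rwa [constantCoeff_eq, ← constantCoeff_eq, ← eval_zero] at this
  rw [map_sub, hr0]; simp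

lemma krull_at {N : ℕ} {ι : Type*} [Fintype ι] (G : MvPolynomial (Fin N) ℂ)
    (F : ι → MvPolynomial (Fin N) ℂ) (b : ι → (Fin N → ℂ) → ℂ) (p : Fin N → ℂ)
    (hb : ∀ i, AnalyticAt ℂ (b i) p)
    (h : ∀ᶠ y in 𝓝 p, eval y G = ∑ i, b i y * eval y (F i)) :
    ∃ (u : MvPolynomial (Fin N) ℂ) (c : ι → MvPolynomial (Fin N) ℂ),
      eval p u ≠ 0 ∧ u * G = ∑ i, c i * F i := by
  let τ : MvPolynomial (Fin N) ℂ →ₐ[ℂ] MvPolynomial (Fin N) ℂ := aeval (fun i => X i + C (p i))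
  let τ' : MvPolynomial (Fin N) ℂ →ₐ[ℂ] MvPolynomial (Fin N) ℂ := aeval (fun i => X i - C (p i))
  have hτ : ∀ H y, eval y (τ H) = eval (y + p) H := by
    intro H y
    induction H using MvPolynomial.induction_on with
    | C a => simp [τ]
    | add _ _ h1 h2 => simp [h1, h2]
    | mul_X q i h1 => simp [h1]; simp [τ]
  have hτ' : ∀ H y, eval y (τ' H) = eval (y - p) H := by
    intro H y
    induction H using MvPolynomial.induction_on with
    | C a => simp [τ']
    | add _ _ h1 h2 => simp [h1, h2]
    | mul_X q i h1 => simp [h1]; simp [τ']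
  have hcomp : ∀ H, τ' (τ H) = H := by
    intro H
    apply MvPolynomial.funext
    intro y
    rw [hτ', hτ]; simp
  have htend : Tendsto (fun y : Fin N → ℂ => y + p) (𝓝 0) (𝓝 p) := by
    have : Continuous (fun y : Fin N → ℂ => y + p) := by fun_prop
    simpa using this.tendsto 0
  obtain ⟨u, c, hu, huc⟩ := krull_zero (τ G) (fun i => τ (F i)) (fun i y => b i (y + p))
    (fun i => by
      have h1 : AnalyticAt ℂ (b i) ((fun y : Fin N → ℂ => y + p) 0) := by simpa using hb i
      exact AnalyticAt.fun_comp (f := fun y : Fin N → ℂ => y + p) h1 (by fun_prop))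
    (by
      filter_upwards [htend.eventually h] with y hy
      simpa [hτ] using hy)
  refine ⟨τ' u, fun i => τ' (c i), ?_, ?_⟩
  · simpa [hτ'] using hu
  · have := congrArg τ' huc
    simpa [hcomp] using this

lemma hasDerivAt_eval {n : ℕ} (H : MvPolynomial (Fin n) ℂ) (γ : ℝ → Fin n → ℂ) (w : Fin n → ℂ)
    (t : ℝ) (hγ : HasDerivAt γ w t) :
    HasDerivAt (fun s => eval (γ s) H) (∑ i, w i * eval (γ t) (pderiv i H)) t := by
  induction H using MvPolynomial.induction_on with
  | C a => simpa using hasDerivAt_const t a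
  | add P Q hP hQ =>
    simp only [map_add, mul_add, Finset.sum_add_distrib]
    exact hP.add hQ
  | mul_X P j hP =>
    have hj : HasDerivAt (fun s => γ s j) (w j) t := (hasDerivAt_pi.mp hγ) j
    have := hP.mul hj
    simp only [map_mul, eval_X, Derivation.leibniz, pderiv_X, smul_eq_mul, map_add]
    refine this.congr_deriv ?_
    symm
    simp only [mul_add, Finset.sum_add_distrib, Finset.sum_mul]
    rw [add_comm]
    congr 1
    · refine Finset.sum_congr rfl fun i _ => by ring
    · rw [Finset.sum_eq_single j]
      · simp; ring
      · intro i _ hij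
        simp [hij.symm]
      · simp

lemma pderiv_comm' {n : ℕ} (i j : Fin n) (g : MvPolynomial (Fin n) ℂ) :
    pderiv j (pderiv i g) = pderiv i (pderiv j g) := by
  let D : Fin n → Derivation ℂ (MvPolynomial (Fin n) ℂ) (MvPolynomial (Fin n) ℂ) :=
    fun k => pderiv k
  have h : ⁅D j, D i⁆ = 0 := by
    apply MvPolynomial.derivation_ext
    intro k
    rw [Derivation.commutator_apply]
    simp only [D, pderiv_X, Derivation.coe_zero, Pi.zero_apply]
    have : ∀ a b : Fin n, pderiv a ((Pi.single b (1 : MvPolynomial (Fin n) ℂ) : Fin n → _) k)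
        = 0 := by
      intro a b
      by_cases hk : k = b
      · subst hk; simp
      · simp [hk]
    rw [this, this, sub_zero]
  have h2 := congrArg (fun D => D g) h
  simp only [D, Derivation.commutator_apply, Derivation.coe_zero, Pi.zero_apply] at h2
  exact sub_eq_zero.mp h2

lemma comm_identity {n : ℕ} (g h : MvPolynomial (Fin n) ℂ) (v : Fin n → MvPolynomial (Fin n) ℂ)
    (y : Fin n → ℂ) (hvg : ∑ i, v i * pderiv i g = h * g) (hg : eval y g = 0) (j : Fin n) :
    eval y h * eval y (pderiv j g) - ∑ i, eval y (pderiv j (v i)) * eval y (pderiv i g)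
      = ∑ i, eval y (v i) * eval y (pderiv i (pderiv j g)) := by
  have e := congrArg (fun P => eval y (pderiv j P)) hvg
  simp only [map_sum, Derivation.leibniz, smul_eq_mul, map_add, map_mul,
    hg, zero_mul, add_zero, Finset.sum_add_distrib] at e
  rw [← e, sub_eq_iff_eq_add]
  refine congrArg₂ (· + ·) ?_ ?_
  · exact Finset.sum_congr rfl fun i _ => by rw [pderiv_comm']
  · exact Finset.sum_congr rfl fun i _ => mul_comm _ _

lemma flow_lemma {n : ℕ} (g h : MvPolynomial (Fin n) ℂ) (v : Fin n → MvPolynomial (Fin n) ℂ)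
    (q : Fin n → ℂ) (hvg : ∑ i, v i * pderiv i g = h * g) (hg : eval q g = 0)
    (hdg : ∀ i, eval q (pderiv i g) = 0) (U : Set (Fin n → ℂ)) (hU : IsOpen U) (hqU : q ∈ U)
    (hiso : ∀ y ∈ U, (eval y g = 0 ∧ ∀ i, eval y (pderiv i g) = 0) → y = q) :
    ∀ i, eval q (v i) = 0 := by
  have hsm : ContDiffAt ℝ 1 (fun y : Fin n → ℂ => fun i => eval y (v i)) q := by
    rw [contDiffAt_pi]
    intro i
    have h1 : AnalyticAt ℂ (fun y : Fin n → ℂ => eval y (v i)) q :=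
      AnalyticOnNhd.eval_mvPolynomial (v i) q trivial
    exact (h1.contDiffAt (n := 1)).restrict_scalars ℝ
  obtain ⟨γ, hγ0, ε, hε, hγ⟩ :=
    hsm.exists_forall_mem_closedBall_exists_eq_forall_mem_Ioo_hasDerivAt₀ 0
  simp only [zero_sub, zero_add] at hγ
  have hIcc : ∀ t ∈ Set.Icc 0 (ε / 2), t ∈ Set.Ioo (-ε) ε := fun t ht =>
    ⟨by linarith [ht.1], by linarith [ht.2]⟩
  have hIco : ∀ t ∈ Set.Ico 0 (ε / 2), t ∈ Set.Icc 0 (ε / 2) := fun t ht => ⟨ht.1, ht.2.le⟩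
  have hγc : ContinuousOn γ (Set.Icc 0 (ε / 2)) := fun t ht =>
    (hγ t (hIcc t ht)).continuousAt.continuousWithinAt
  have hec : ∀ H : MvPolynomial (Fin n) ℂ,
      ContinuousOn (fun t => eval (γ t) H) (Set.Icc 0 (ε / 2)) := fun H =>
    (MvPolynomial.continuous_eval H).comp_continuousOn hγc
  have hbd : ∀ H : MvPolynomial (Fin n) ℂ, ∃ K, ∀ t ∈ Set.Icc 0 (ε / 2), ‖eval (γ t) H‖ ≤ K :=
    fun H => isCompact_Icc.exists_bound_of_continuousOn (hec H)
  obtain ⟨K, hK⟩ := hbd h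
  -- g vanishes along the curve
  have hg0 : ∀ t ∈ Set.Icc 0 (ε / 2), eval (γ t) g = 0 := by
    refine eq_zero_of_abs_deriv_le_mul_abs_self_of_eq_zero_right (K := K)
      (f' := fun t => eval (γ t) h * eval (γ t) g) (hec g) ?_ (by rw [hγ0, hg]) ?_
    · intro t ht
      have := hasDerivAt_eval g γ _ t (hγ t (hIcc t (hIco t ht)))
      have e := congrArg (eval (γ t)) hvg
      simp only [map_sum, map_mul] at e
      rw [e] at this
      exact this.hasDerivWithinAt
    · intro t ht
      rw [norm_mul]
      exact mul_le_mul_of_nonneg_right (hK t (hIco t ht)) (norm_nonneg _)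
  choose L hL using fun (j i : Fin n) => hbd (pderiv j (v i))
  have hK0 : 0 ≤ K := (norm_nonneg _).trans (hK 0 ⟨le_rfl, by linarith⟩)
  have hL0 : ∀ j i, 0 ≤ L j i := fun j i => (norm_nonneg _).trans (hL j i 0 ⟨le_rfl, by linarith⟩)
  have hd0 : ∀ t ∈ Set.Icc 0 (ε / 2), (fun j => eval (γ t) (pderiv j g)) = (0 : Fin n → ℂ) := by
    refine eq_zero_of_abs_deriv_le_mul_abs_self_of_eq_zero_right (K := K + ∑ j, ∑ i, L j i)
      (f' := fun t => fun j => eval (γ t) h * eval (γ t) (pderiv j g)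
        - ∑ i, eval (γ t) (pderiv j (v i)) * eval (γ t) (pderiv i g)) ?_ ?_ ?_ ?_
    · exact continuousOn_pi.mpr fun j => hec _
    · intro t ht
      rw [hasDerivWithinAt_pi]
      intro j
      have := hasDerivAt_eval (pderiv j g) γ _ t (hγ t (hIcc t (hIco t ht)))
      refine HasDerivAt.hasDerivWithinAt ?_
      refine this.congr_deriv ?_
      symm
      exact comm_identity g h v _ hvg (hg0 t (hIco t ht)) j
    · funext j
      rw [hγ0, hdg]; rfl
    · intro t ht
      have ht := hIco t ht
      set W : Fin n → ℂ := fun j => eval (γ t) (pderiv j g) with hW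
      have hWi : ∀ i, ‖eval (γ t) (pderiv i g)‖ ≤ ‖W‖ := fun i => norm_le_pi_norm W i
      refine (pi_norm_le_iff_of_nonneg ?_).mpr ?_
      · exact mul_nonneg (add_nonneg hK0 (Finset.sum_nonneg fun j _ =>
          Finset.sum_nonneg fun i _ => hL0 j i)) (norm_nonneg _)
      · intro j
        refine (norm_sub_le _ _).trans ?_
        rw [add_mul]
        refine add_le_add ?_ ?_
        · rw [norm_mul]
          exact mul_le_mul (hK t ht) (hWi j) (norm_nonneg _) hK0
        · refine (norm_sum_le _ _).trans ?_
          calc _ ≤ ∑ i, L j i * ‖W‖ := by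
                refine Finset.sum_le_sum fun i _ => ?_
                rw [norm_mul]
                exact mul_le_mul (hL j i t ht) (hWi i) (norm_nonneg _) (hL0 j i)
            _ = (∑ i, L j i) * ‖W‖ := by rw [Finset.sum_mul]
            _ ≤ _ := by
                refine mul_le_mul_of_nonneg_right ?_ (norm_nonneg _)
                exact Finset.single_le_sum (f := fun j => ∑ i, L j i)
                  (fun j _ => Finset.sum_nonneg fun i _ => hL0 j i) (Finset.mem_univ j)
  have h0 := hγ 0 ⟨by linarith, hε⟩
  have hconst : γ =ᶠ[𝓝[≥] 0] fun _ => q := by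
    have h1 : ∀ᶠ t in 𝓝[≥] (0 : ℝ), γ t ∈ U :=
      (h0.continuousAt.eventually (by rw [hγ0]; exact hU.mem_nhds hqU)).filter_mono
        nhdsWithin_le_nhds
    filter_upwards [h1, Icc_mem_nhdsGE (show (0 : ℝ) < ε / 2 by linarith)] with t ht ht'
    exact hiso _ ht ⟨hg0 t ht', fun i => congrFun (hd0 t ht') i⟩
  have h1 : HasDerivWithinAt γ 0 (Set.Ici 0) 0 :=
    (hasDerivWithinAt_const (0 : ℝ) (Set.Ici (0 : ℝ)) q).congr_of_eventuallyEq hconst hγ0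
  have h2 := (uniqueDiffWithinAt_Ici (0 : ℝ)).eq_deriv _ h0.hasDerivWithinAt h1
  intro i
  have := congrFun h2 i
  rw [hγ0] at this
  exact this

lemma eval_dehom (n : ℕ) (f : MvPolynomial (Fin (n + 1)) ℂ) (y : Fin n → ℂ) :
    eval y (dehom n f) = eval (Fin.cons 1 y : Fin (n + 1) → ℂ) f := by
  unfold dehom
  induction f using MvPolynomial.induction_on with
  | C a => simp
  | add _ _ h1 h2 => simp only [map_add, h1, h2]
  | mul_X P i h1 =>
    simp only [map_mul, h1, aeval_X, eval_X]
    refine Fin.cases ?_ (fun j => ?_) i <;> simp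

lemma dehom_mul (n : ℕ) (a b : MvPolynomial (Fin (n + 1)) ℂ) :
    dehom n (a * b) = dehom n a * dehom n b := by simp [dehom]

lemma pderiv_dehom (n : ℕ) (f : MvPolynomial (Fin (n + 1)) ℂ) (i : Fin n) :
    pderiv i (dehom n f) = dehom n (pderiv i.succ f) := by
  unfold dehom
  induction f using MvPolynomial.induction_on with
  | C a => simp [algebraMap_eq]
  | add _ _ h1 h2 => simp only [map_add, h1, h2]
  | mul_X P j h1 =>
    simp only [map_mul, aeval_X, Derivation.leibniz, h1, map_add, smul_eq_mul]
    congr 2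
    refine Fin.cases ?_ (fun k => ?_) j
    · rw [pderiv_X_of_ne (Fin.succ_ne_zero i).symm]; simp
    · by_cases hk : k = i
      · subst hk; simp
      · rw [pderiv_X_of_ne (by simpa using hk)]
        simp [pderiv_X_of_ne hk]

lemma syzRank_zero_iff (n : ℕ) (f : MvPolynomial (Fin (n + 1)) ℂ) (p : Fin (n + 1) → ℂ) :
    syzRank n f p = 0 ↔ ∀ a ∈ syzSet n f, ∀ i, eval p (a i) = 0 := by
  unfold syzRank
  rw [Submodule.finrank_eq_zero, Submodule.span_eq_bot]
  constructor
  · intro h a ha i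
    exact congrFun (h _ ⟨a, ha, rfl⟩) i
  · rintro h _ ⟨a, ha, rfl⟩
    funext i
    exact h a ha i

/-- The Euler-type identity on the affine chart for a syzygy. -/
lemma affine_identity (n d : ℕ) (f : MvPolynomial (Fin (n + 1)) ℂ) (hhom : f.IsHomogeneous d)
    (a : Fin (n + 1) → MvPolynomial (Fin (n + 1)) ℂ) (ha : a ∈ syzSet n f) :
    ∑ i : Fin n, (dehom n (a i.succ) - dehom n (a 0) * X i) * pderiv i (dehom n f)
      = (-(C (d : ℂ) * dehom n (a 0))) * dehom n f := by
  have ha : ∑ i, a i * pderiv i f = 0 := ha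
  have h1 := congrArg (dehom n) ha
  have h2 := congrArg (dehom n) hhom.sum_X_mul_pderiv
  rw [Fin.sum_univ_succ] at h1 h2
  simp only [pderiv_dehom]
  simp only [dehom, map_add, map_sum, map_mul, aeval_X, map_zero, Fin.cons_zero, Fin.cons_succ,
    nsmul_eq_mul, one_mul, map_natCast] at h1 h2 ⊢
  simp only [sub_mul, Finset.sum_sub_distrib, mul_assoc, ← Finset.mul_sum]
  linear_combination h1 - (aeval (Fin.cons (1 : MvPolynomial (Fin n) ℂ) fun i => X i)) (a 0) * h2

/-- A smooth point admits a Koszul syzygy not vanishing there. -/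
lemma smooth_case (n : ℕ) (f : MvPolynomial (Fin (n + 1)) ℂ) (p : Fin (n + 1) → ℂ)
    (h : ∀ a ∈ syzSet n f, ∀ i, eval p (a i) = 0) (i : Fin n) :
    eval p (pderiv i.succ f) = 0 := by
  have hne : (0 : Fin (n + 1)) ≠ i.succ := (Fin.succ_ne_zero i).symm
  let s : Fin (n + 1) → MvPolynomial (Fin (n + 1)) ℂ → Fin (n + 1) → MvPolynomial (Fin (n + 1)) ℂ :=
    fun j P => Pi.single j P
  have := h (s 0 (pderiv i.succ f) - s i.succ (pderiv 0 f)) (by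
    change ∑ j, _ = 0
    simp only [s, Pi.sub_apply, sub_mul, Finset.sum_sub_distrib]
    rw [Finset.sum_eq_single 0, Finset.sum_eq_single i.succ]
    · simp; ring
    · intro j _ hj; simp [hj]
    · simp
    · intro j _ hj; simp [hj]
    · simp) 0
  simpa [s, hne] using this

lemma seh_case (n d : ℕ) (hd : 1 ≤ d)
    (f : MvPolynomial (Fin (n + 1)) ℂ) (hhom : f.IsHomogeneous d)
    (p : Fin (n + 1) → ℂ) (hp0 : p 0 = 1) (h : StronglyEulerHomogeneousAt n f p) :
    ∃ a ∈ syzSet n f, eval p (a 0) ≠ 0 := by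
  obtain ⟨U, a, hU, hqU, han, -, hid⟩ := h
  let π : (Fin (n + 1) → ℂ) → (Fin n → ℂ) := fun x i => x i.succ / x 0
  have hπp : π p = fun i => p i.succ := by funext i; simp [π, hp0]
  have hp0' : p 0 ≠ 0 := by simp [hp0]
  have hπan : AnalyticAt ℂ π p := by
    refine AnalyticAt.pi fun i => ?_
    exact AnalyticAt.div ((ContinuousLinearMap.proj (R := ℂ) (φ := fun _ : Fin (n + 1) => ℂ)
      i.succ).analyticAt p) ((ContinuousLinearMap.proj (R := ℂ) (φ := fun _ : Fin (n + 1) => ℂ)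
      0).analyticAt p) hp0'
  have hx0an : AnalyticAt ℂ (fun x : Fin (n + 1) → ℂ => x 0) p :=
    (ContinuousLinearMap.proj (R := ℂ) (φ := fun _ : Fin (n + 1) => ℂ) 0).analyticAt p
  obtain ⟨u, c, hu, huc⟩ := krull_at f (fun i : Fin n => pderiv i.succ f)
    (fun i x => x 0 * a i (π x)) p
    (fun i => hx0an.mul (AnalyticAt.fun_comp (by rw [hπp]; exact han i _ hqU) hπan))
    (by
      have e1 : ∀ᶠ x in 𝓝 p, π x ∈ U :=
        hπan.continuousAt.eventually (by rw [hπp]; exact hU.mem_nhds hqU)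
      have e2 : ∀ᶠ x in 𝓝 p, x 0 ≠ 0 := hx0an.continuousAt.eventually_ne hp0'
      filter_upwards [e1, e2] with x hx hx0
      have hxx : x = fun i => x 0 * (Fin.cons 1 (π x) : Fin (n + 1) → ℂ) i := by
        funext i
        refine Fin.cases ?_ (fun j => ?_) i
        · simp
        · simp [π]; field_simp
      have hf := eval_smul_homog hhom (x 0) (Fin.cons 1 (π x))
      rw [← hxx, ← eval_dehom, hid _ hx, Finset.mul_sum] at hf
      rw [hf]
      refine Finset.sum_congr rfl fun i _ => ?_
      have hfi := eval_smul_homog (hhom.pderiv (i := i.succ)) (x 0) (Fin.cons 1 (π x))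
      rw [← hxx] at hfi
      rw [hfi, pderiv_dehom, eval_dehom]
      obtain ⟨e, rfl⟩ : ∃ e, d = e + 1 := ⟨d - 1, by omega⟩
      simp only [Nat.add_sub_cancel]
      ring)
  refine ⟨Fin.cons (u * X 0) (fun i => u * X i.succ - C (d : ℂ) * c i), ?_, ?_⟩
  · change ∑ i, _ = 0
    have h2 := hhom.sum_X_mul_pderiv
    rw [Fin.sum_univ_succ] at h2 ⊢
    simp only [Fin.cons_zero, Fin.cons_succ, nsmul_eq_mul, sub_mul, Finset.sum_sub_distrib,
      mul_assoc, ← Finset.mul_sum] at h2 ⊢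
    rw [← huc, show (C (d : ℂ) : MvPolynomial (Fin (n + 1)) ℂ) = (d : MvPolynomial _ ℂ) by simp]
    linear_combination u * h2
  · simpa [hp0] using hu

end Helpers

/-- If `p` is an at most isolated singular point of `D = V(f)`, then `rk M'_f(p) = 0` iff `p`
is a singular point of `D` and `D` is not strongly Euler homogeneous at `p`. -/
theorem syzRank_eq_zero_iff (n d : ℕ) (hn : 1 ≤ n) (hd : 1 ≤ d)
    (f : MvPolynomial (Fin (n + 1)) ℂ) (hsf : Squarefree f) (hhom : f.IsHomogeneous d)
    (p : Fin (n + 1) → ℂ) (hp0 : p 0 = 1) (hpf : eval p f = 0)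
    (hiso : AtMostIsolatedSingAt n f p) :
    syzRank n f p = 0 ↔
      ((∀ i : Fin n, eval (fun j => p j.succ) (pderiv i (dehom n f)) = 0) ∧
        ¬ StronglyEulerHomogeneousAt n f p) := by
  set q : Fin n → ℂ := fun j => p j.succ with hq
  have hpq : (Fin.cons 1 q : Fin (n + 1) → ℂ) = p := by
    funext i
    refine Fin.cases ?_ (fun j => ?_) i
    · simp [hp0]
    · simp [hq]
  rw [syzRank_zero_iff]
  constructor
  · intro h
    refine ⟨fun i => ?_, fun hs => ?_⟩
    · rw [pderiv_dehom, eval_dehom, hpq]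
      exact smooth_case n f p h i
    · obtain ⟨a, ha, ha0⟩ := seh_case n d hd f hhom p hp0 hs
      exact ha0 (h a ha 0)
  · rintro ⟨hsing, hns⟩ a ha
    obtain ⟨U, hU, hqU, hiso⟩ := hiso
    have hid := affine_identity n d f hhom a ha
    have hv := flow_lemma _ _ _ q hid (by rw [eval_dehom, hpq, hpf]) hsing U hU hqU hiso
    have hv' : ∀ i : Fin n, eval p (a i.succ) = eval p (a 0) * q i := by
      intro i
      have := hv i
      simp only [map_sub, map_mul, eval_X, eval_dehom, hpq] at this
      exact sub_eq_zero.mp this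
    have ha0 : eval p (a 0) = 0 := by
      by_contra h0
      apply hns
      have hA : ∀ H : MvPolynomial (Fin n) ℂ, ∀ y, AnalyticAt ℂ (fun y => eval y H) y := fun H y =>
        AnalyticOnNhd.eval_mvPolynomial H y trivial
      have hdne : (d : ℂ) ≠ 0 := by exact_mod_cast (by omega : d ≠ 0)
      let B : MvPolynomial (Fin n) ℂ := -(C (d : ℂ) * dehom n (a 0))
      refine ⟨{y | eval y B ≠ 0}, fun i y => eval y (dehom n (a i.succ) - dehom n (a 0) * X i)
        / eval y B, ?_, ?_, ?_, ?_, ?_⟩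
      · exact isOpen_ne_fun (MvPolynomial.continuous_eval B) continuous_const
      · change eval q B ≠ 0
        simp only [B, map_neg, map_mul, eval_C, eval_dehom, hpq]
        exact neg_ne_zero.mpr (mul_ne_zero hdne h0)
      · intro i y hy
        exact (hA _ y).div (hA B y) hy
      · intro i
        change eval q _ / eval q B = 0
        rw [hv i, zero_div]
      · intro y hy
        have hy : eval y B ≠ 0 := hy
        have e := congrArg (eval y) hid
        rw [map_sum, map_mul] at e
        simp only [div_mul_eq_mul_div, ← Finset.sum_div]
        rw [eq_div_iff hy, mul_comm]
        simp only [map_mul] at e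
        exact e.symm
    intro i
    refine Fin.cases ha0 (fun j => ?_) i
    rw [hv' j, ha0, zero_mul]

end
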